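/- arXiv:1304.8043 — 2 statements merged into one kernel-verified Lean document; each statement's English description precedes it below -/
import Mathlib

section
/- A k-tuple T = (T_1,…,T_k) ∈ D_f^m(H) is pure if and only if, for each i ∈ {1,…,k}, Φ_{f_i,T_i}^p(I) → 0 in the strong operator topology as p → ∞. -/
open Filter Topology
open scoped InnerProductSpace Topology

noncomputable section

namespace NC

variable {H : Type*} [NormedAddCommGroup H] [InnerProductSpace ℂ H] [CompleteSpace H]

/-- The operator `X_w = X_{j_1} ⋯ X_{j_p}` associated with a word `w ∈ F_d⁺`. -/
def listProd {d : ℕ} (X : Fin d → (H →L[ℂ] H)) (w : List (Fin d)) : H →L[ℂ] H :=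
  (w.map X).prod

/-- `T_{1,β_1} ⋯ T_{k,β_k}` for a `k`-tuple of words `(β_1, …, β_k)`. -/
def tupleWord {k : ℕ} {n : Fin k → ℕ} (T : ∀ i, Fin (n i) → (H →L[ℂ] H))
    (w : ∀ i, List (Fin (n i))) : H →L[ℂ] H :=
  (List.ofFn fun i => listProd (T i) (w i)).prod

/-- the entries of `T_p` commute with the entries of `T_q` for `p ≠ q` -/
def CommutingTuples {k : ℕ} {n : Fin k → ℕ} (T : ∀ i, Fin (n i) → (H →L[ℂ] H)) : Prop :=
  ∀ i j, i ≠ j → ∀ p q, Commute (T i p) (T j q)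

/-- coefficients of a positive regular free holomorphic function in `d` noncommuting
indeterminates:  nonnegative coefficients, zero constant term, nonzero linear
coefficients, and finite radius-type limsup condition. -/
def PosRegCoeffs {d : ℕ} (c : List (Fin d) → ℝ) : Prop :=
  (∀ w, 0 ≤ c w) ∧ c [] = 0 ∧ (∀ j, 0 < c [j]) ∧
    ∃ C : ℝ, ∀ᶠ l : ℕ in atTop,
      (∑ w : Fin l → Fin d, (c (List.ofFn w)) ^ 2) ^ ((1 : ℝ) / (2 * l)) ≤ C

/-- partial sums of `Φ_{f,X}(Y) = Σ_{|w| ≥ 1} c_w X_w Y X_w^*` over words of length `≤ N` -/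
def phiPartial {d : ℕ} (c : List (Fin d) → ℝ) (X : Fin d → (H →L[ℂ] H))
    (Y : H →L[ℂ] H) (N : ℕ) : H →L[ℂ] H :=
  ∑ l ∈ Finset.Icc 1 N, ∑ w : Fin l → Fin d,
    ((c (List.ofFn w) : ℝ) : ℂ) •
      (listProd X (List.ofFn w) * Y * ContinuousLinearMap.adjoint (listProd X (List.ofFn w)))

/-- `Φ` is the map `Φ_{f,X}`, i.e. the WOT limit of the partial sums of
`Σ_{|w| ≥ 1} c_w X_w Y X_w^*`, for every `Y`. -/
def IsPhiMap {d : ℕ} (c : List (Fin d) → ℝ) (X : Fin d → (H →L[ℂ] H))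
    (Φ : Module.End ℂ (H →L[ℂ] H)) : Prop :=
  ∀ (Y : H →L[ℂ] H) (x y : H),
    Tendsto (fun N => ⟪(phiPartial c X Y N) x, y⟫_ℂ) atTop (𝓝 ⟪(Φ Y) x, y⟫_ℂ)

/-- `Δ_Φ^p := (id − Φ_1)^{p_1} ∘ ⋯ ∘ (id − Φ_k)^{p_k}` -/
def Delta {k : ℕ} (Φ : Fin k → Module.End ℂ (H →L[ℂ] H)) (p : Fin k → ℕ) :
    Module.End ℂ (H →L[ℂ] H) :=
  (List.ofFn fun i => (1 - Φ i) ^ (p i)).prod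

/-- `(id − Φ_1^{q_1}) ∘ ⋯ ∘ (id − Φ_k^{q_k})` -/
def DeltaPow {k : ℕ} (Φ : Fin k → Module.End ℂ (H →L[ℂ] H)) (q : Fin k → ℕ) :
    Module.End ℂ (H →L[ℂ] H) :=
  (List.ofFn fun i => 1 - (Φ i) ^ (q i)).prod

/-- membership in the noncommutative polydomain `D_f^m(H)`:  the coordinate tuples
commute with each other, the maps `Φ_{f_i,T_i}` are defined (as WOT limits),
`Φ_{f_i,T_i}(I) ≤ I`, and
`(id−Φ_{f_1,T_1})^{ε_1 m_1} ⋯ (id−Φ_{f_k,T_k})^{ε_k m_k}(I) ≥ 0` for all `ε_i ∈ {0,1}`. -/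
def MemPolydomain {k : ℕ} {n : Fin k → ℕ} (a : ∀ i, List (Fin (n i)) → ℝ)
    (m : Fin k → ℕ) (T : ∀ i, Fin (n i) → (H →L[ℂ] H)) : Prop :=
  CommutingTuples T ∧
  ∃ Φ : Fin k → Module.End ℂ (H →L[ℂ] H),
    (∀ i, IsPhiMap (a i) (T i) (Φ i)) ∧
    (∀ i, ((1 : H →L[ℂ] H) - Φ i 1).IsPositive) ∧
    (∀ ε : Fin k → Bool, ((Delta Φ fun i => if ε i then m i else 0) 1).IsPositive)

/-- purity of a tuple `T`, expressed through its `Φ`-maps: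
`(id−Φ_k^{q_k}) ⋯ (id−Φ_1^{q_1})(I) → I`. -/
def IsPure {k : ℕ} (Φ : Fin k → Module.End ℂ (H →L[ℂ] H)) : Prop :=
  ∀ x : H, Tendsto (fun q : Fin k → ℕ => ((DeltaPow Φ q) 1) x) atTop (𝓝 x)

end NC

namespace NC

/-! Put `e = I`. An order-bounded `x` with `(1 - φ)^m x ≥ 0` already satisfies `φ x ≤ x`, because
telescoping the increasing sequence `φ^j (φ x - x)` bounds every multiple `n (φ x - x)` by a fixed
multiple of `e`. Applied to one index at a time, this turns the positivity of all
`∏_{i ∈ t} (1 - φ_i)^{m_i} e` into that of all `∏_{i ∈ s} (1 - φ_i^{q_i}) e`, whence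
`0 ≤ φ_j^{q_j} e ≤ e - ∏_i (1 - φ_i^{q_i}) e ≤ ∑_i φ_i^{q_i} e` for each `j`.
Since `‖A x‖² ≤ ⟨A x, x⟩` for `0 ≤ A ≤ I`, strong convergence to zero passes from the right of this
chain to the left. -/

section MonotoneAction

variable {M E : Type*} [Monoid M] [Preorder E] [MulAction M E] {a : M} {x : E}

theorem monotone_pow_smul (ha : Monotone (a • · : E → E)) (n : ℕ) :
    Monotone (a ^ n • · : E → E) := by
  simpa only [smul_iterate] using ha.iterate n

theorem pow_smul_le_self (ha : Monotone (a • · : E → E)) (hx : a • x ≤ x) (n : ℕ) :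
    a ^ n • x ≤ x := by
  simpa [smul_iterate] using ha.antitone_iterate_of_map_le hx n.zero_le

theorem self_le_pow_smul (ha : Monotone (a • · : E → E)) (hx : x ≤ a • x) (n : ℕ) :
    x ≤ a ^ n • x := by
  simpa [smul_iterate] using ha.monotone_iterate_of_le_map hx n.zero_le

theorem smul_nonneg_of_monotone {M E : Type*} [Zero E] [Preorder E] [SMulZeroClass M E] {a : M}
    {x : E} (ha : Monotone (a • · : E → E)) (hx : 0 ≤ x) : 0 ≤ a • x := by
  simpa using ha hx

end MonotoneAction

/-- `e` is an Archimedean order unit of the ordered group `E`: positive elements are dominated by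
multiples of `e`, and no `x` outside the negative cone has all its multiples below one multiple of
`e`. Domination is asked of positive elements only, so that the unit of a C⋆-algebra qualifies
without restricting to the self-adjoint part. -/
structure IsArchimedeanOrderUnit {E : Type*} [AddCommGroup E] [PartialOrder E] (e : E) : Prop where
  nonneg : 0 ≤ e
  exists_le_nsmul : ∀ x, 0 ≤ x → ∃ c : ℕ, x ≤ c • e
  nonpos_of_forall_nsmul_le : ∀ x, ∀ c : ℕ, (∀ n : ℕ, n • x ≤ c • e) → x ≤ 0

section OrderedModule

variable {R E : Type*} [Ring R] [AddCommGroup E] [PartialOrder E] [IsOrderedAddMonoid E]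
  [Module R E] {a : R} {e x : E} {c : ℕ}

theorem one_sub_smul_nonneg_iff : 0 ≤ (1 - a) • x ↔ a • x ≤ x := by
  rw [sub_smul, one_smul, sub_nonneg]

theorem nsmul_smul_sub_le (ha : Monotone (a • · : E → E)) (hx : a • x - x ≤ a • (a • x - x))
    (n : ℕ) : n • (a • x - x) ≤ a ^ n • x - x :=
  calc n • (a • x - x) = ∑ _j ∈ Finset.range n, (a • x - x) := by
        rw [Finset.sum_const, Finset.card_range]
    _ ≤ ∑ j ∈ Finset.range n, a ^ j • (a • x - x) :=
      Finset.sum_le_sum fun j _ => self_le_pow_smul ha hx j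
    _ = ((∑ j ∈ Finset.range n, a ^ j) * (a - 1)) • x := by
      rw [mul_smul, sub_smul, one_smul, Finset.sum_smul]
    _ = a ^ n • x - x := by rw [geom_sum_mul, sub_smul, one_smul]

theorem smul_mem_Icc_nsmul (ha : Monotone (a • · : E → E)) (hae : a • e ≤ e)
    (hx : x ∈ Set.Icc (-(c • e)) (c • e)) : a • x ∈ Set.Icc (-(c • e)) (c • e) := by
  have hce : a • c • e ≤ c • e := by
    rw [smul_comm]
    exact nsmul_le_nsmul_right hae c
  refine ⟨?_, (ha hx.2).trans hce⟩
  calc -(c • e) ≤ a • -(c • e) := by rw [smul_neg]; exact neg_le_neg hce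
    _ ≤ a • x := ha hx.1

theorem one_sub_smul_mem_Icc_nsmul (ha : Monotone (a • · : E → E)) (hae : a • e ≤ e)
    (hx : x ∈ Set.Icc (-(c • e)) (c • e)) :
    (1 - a) • x ∈ Set.Icc (-((c + c) • e)) ((c + c) • e) := by
  have hax := smul_mem_Icc_nsmul ha hae hx
  rw [sub_smul, one_smul, add_nsmul, neg_add']
  refine ⟨sub_le_sub hx.1 hax.2, ?_⟩
  simpa using sub_le_sub hx.2 hax.1

namespace IsArchimedeanOrderUnit

theorem smul_le_self_of_sq (he : IsArchimedeanOrderUnit e) (ha : Monotone (a • · : E → E))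
    (hae : a • e ≤ e) (hx : x ∈ Set.Icc (-(c • e)) (c • e)) (h : 0 ≤ (1 - a) ^ 2 • x) :
    a • x ≤ x := by
  have hincr : a • x - x ≤ a • (a • x - x) := by
    have hsq : (1 - a) ^ 2 • x = a • (a • x - x) - (a • x - x) := by
      simp only [sq, mul_smul, sub_smul, one_smul, smul_sub]
      abel
    exact sub_nonneg.1 (hsq ▸ h)
  refine sub_nonpos.1 (he.nonpos_of_forall_nsmul_le _ (c + c) fun n => ?_)
  have hpow : a ^ n • x ≤ c • e :=
    (smul_mem_Icc_nsmul (monotone_pow_smul ha n) (pow_smul_le_self ha hae n) hx).2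
  calc n • (a • x - x) ≤ a ^ n • x - x := nsmul_smul_sub_le ha hincr n
    _ ≤ c • e - -(c • e) := sub_le_sub hpow hx.1
    _ = (c + c) • e := by rw [sub_neg_eq_add, add_nsmul]

theorem smul_le_self_of_pow (he : IsArchimedeanOrderUnit e) (ha : Monotone (a • · : E → E))
    (hae : a • e ≤ e) (hx : x ∈ Set.Icc (-(c • e)) (c • e)) {m : ℕ} (hm : 1 ≤ m)
    (h : 0 ≤ (1 - a) ^ m • x) : a • x ≤ x := by
  induction m, hm using Nat.le_induction generalizing x c with
  | base => rwa [pow_one, one_sub_smul_nonneg_iff] at h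
  | succ m _ ih =>
    rw [pow_succ, mul_smul] at h
    have hdiff : 0 ≤ (1 - a) • (1 - a) • x :=
      one_sub_smul_nonneg_iff.2 (ih (one_sub_smul_mem_Icc_nsmul ha hae hx) h)
    exact he.smul_le_self_of_sq ha hae hx (by rwa [sq, mul_smul])

theorem exists_mem_Icc_nsmul (he : IsArchimedeanOrderUnit e) (hx : 0 ≤ x) :
    ∃ c : ℕ, x ∈ Set.Icc (-(c • e)) (c • e) := by
  obtain ⟨c, hc⟩ := he.exists_le_nsmul x hx
  exact ⟨c, (neg_nonpos.2 (nsmul_nonneg he.nonneg c)).trans hx, hc⟩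

theorem one_sub_pow_smul_nonneg (he : IsArchimedeanOrderUnit e)
    (ha : Monotone (a • · : E → E)) (hae : a • e ≤ e) (hx : 0 ≤ x) {m : ℕ} (hm : 1 ≤ m)
    (h : 0 ≤ (1 - a) ^ m • x) (q : ℕ) : 0 ≤ (1 - a ^ q) • x := by
  obtain ⟨c, hc⟩ := he.exists_mem_Icc_nsmul hx
  exact one_sub_smul_nonneg_iff.2 (pow_smul_le_self ha (he.smul_le_self_of_pow ha hae hc hm h) q)

end IsArchimedeanOrderUnit

end OrderedModule

section CommutingFamily

variable {R E ι : Type*} [CommRing R] [AddCommGroup E] [PartialOrder E] [IsOrderedAddMonoid E]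
  [Module R E] {φ : ι → R} {e : E} {m q : ι → ℕ}

theorem IsArchimedeanOrderUnit.prod_one_sub_pow_smul_nonneg (he : IsArchimedeanOrderUnit e)
    (hφ : ∀ i, Monotone (φ i • · : E → E)) (hφe : ∀ i, φ i • e ≤ e) (hm : ∀ i, 1 ≤ m i)
    (h : ∀ t : Finset ι, 0 ≤ (∏ i ∈ t, (1 - φ i) ^ m i) • e) (q : ι → ℕ) (s : Finset ι) :
    0 ≤ (∏ i ∈ s, (1 - φ i ^ q i)) • e := by
  classical
  suffices hmixed : ∀ t : Finset ι, Disjoint s t →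
      0 ≤ ((∏ i ∈ s, (1 - φ i ^ q i)) * ∏ i ∈ t, (1 - φ i) ^ m i) • e by
    simpa using hmixed ∅ (Finset.disjoint_empty_right s)
  induction s using Finset.induction_on with
  | empty => simpa using h
  | insert j s hj ih =>
    intro t hst
    obtain ⟨hjt, hst⟩ := Finset.disjoint_insert_left.1 hst
    have hx := ih t hst
    have hmx := ih (insert j t) (Finset.disjoint_insert_right.2 ⟨hj, hst⟩)
    rw [Finset.prod_insert hjt, mul_left_comm, mul_smul] at hmx
    rw [Finset.prod_insert hj, mul_assoc, mul_smul]
    exact he.one_sub_pow_smul_nonneg (hφ j) (hφe j) hx (hm j) hmx (q j)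

theorem antitone_prod_one_sub_pow_smul (hφ : ∀ i, Monotone (φ i • · : E → E))
    (h : ∀ s : Finset ι, 0 ≤ (∏ i ∈ s, (1 - φ i ^ q i)) • e) :
    Antitone fun s : Finset ι => (∏ i ∈ s, (1 - φ i ^ q i)) • e := by
  classical
  refine Finset.antitone_iff_forall_insert_le.2 fun s j hj => ?_
  rw [Finset.prod_insert hj, mul_smul, sub_smul, one_smul]
  exact sub_le_self _ (smul_nonneg_of_monotone (monotone_pow_smul (hφ j) (q j)) (h s))

theorem prod_one_sub_pow_smul_le (hφ : ∀ i, Monotone (φ i • · : E → E))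
    (h : ∀ s : Finset ι, 0 ≤ (∏ i ∈ s, (1 - φ i ^ q i)) • e) (s : Finset ι) :
    (∏ i ∈ s, (1 - φ i ^ q i)) • e ≤ e := by
  simpa using antitone_prod_one_sub_pow_smul hφ h (Finset.empty_subset s)

theorem pow_smul_le_sub_prod_smul (hφ : ∀ i, Monotone (φ i • · : E → E))
    (h : ∀ s : Finset ι, 0 ≤ (∏ i ∈ s, (1 - φ i ^ q i)) • e) {s : Finset ι} {j : ι} (hj : j ∈ s) :
    φ j ^ q j • e ≤ e - (∏ i ∈ s, (1 - φ i ^ q i)) • e := by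
  have hle := antitone_prod_one_sub_pow_smul hφ h (Finset.singleton_subset_iff.2 hj)
  beta_reduce at hle
  rw [Finset.prod_singleton, sub_smul, one_smul] at hle
  exact le_sub_comm.1 hle

theorem sub_prod_smul_le_sum_pow_smul (hφ : ∀ i, Monotone (φ i • · : E → E))
    (h : ∀ s : Finset ι, 0 ≤ (∏ i ∈ s, (1 - φ i ^ q i)) • e) (s : Finset ι) :
    e - (∏ i ∈ s, (1 - φ i ^ q i)) • e ≤ ∑ i ∈ s, φ i ^ q i • e := by
  classical
  induction s using Finset.induction_on with
  | empty => simp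
  | insert j s hj ih =>
    set P := ∏ i ∈ s, (1 - φ i ^ q i)
    have hPe : φ j ^ q j • P • e ≤ φ j ^ q j • e :=
      monotone_pow_smul (hφ j) (q j) (prod_one_sub_pow_smul_le hφ h s)
    rw [Finset.prod_insert hj, Finset.sum_insert hj]
    calc e - ((1 - φ j ^ q j) * P) • e = φ j ^ q j • P • e + (e - P • e) := by
          rw [mul_smul, sub_smul, one_smul]
          abel
      _ ≤ φ j ^ q j • e + ∑ i ∈ s, φ i ^ q i • e := add_le_add hPe ih

end CommutingFamily

section WeakLimits

variable {𝕜 H ι : Type*} [RCLike 𝕜] [NormedAddCommGroup H] [InnerProductSpace 𝕜 H]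
  {l : Filter ι} [l.NeBot] {u v : ι → H →L[𝕜] H} {A B : H →L[𝕜] H}

theorem isPositive_of_tendsto_inner (hu : ∀ᶠ i in l, (u i).IsPositive)
    (hA : ∀ x y, Tendsto (fun i => ⟪u i x, y⟫_𝕜) l (𝓝 ⟪A x, y⟫_𝕜)) : A.IsPositive := by
  refine ContinuousLinearMap.isPositive_def.2 ⟨fun x y => ?_, fun x => ?_⟩
  · have hstar : Tendsto (fun i => ⟪x, u i y⟫_𝕜) l (𝓝 ⟪x, A y⟫_𝕜) := by
      simpa using (hA y x).star
    refine tendsto_nhds_unique ((hA x y).congr' ?_) hstar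
    filter_upwards [hu] with i hi using hi.inner_left_eq_inner_right x y
  · refine ge_of_tendsto ((RCLike.continuous_re.tendsto _).comp (hA x x)) ?_
    filter_upwards [hu] with i hi using hi.re_inner_nonneg_left x

theorem le_of_tendsto_inner (huv : ∀ᶠ i in l, u i ≤ v i)
    (hA : ∀ x y, Tendsto (fun i => ⟪u i x, y⟫_𝕜) l (𝓝 ⟪A x, y⟫_𝕜))
    (hB : ∀ x y, Tendsto (fun i => ⟪v i x, y⟫_𝕜) l (𝓝 ⟪B x, y⟫_𝕜)) : A ≤ B := by
  refine (ContinuousLinearMap.le_def A B).2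
    (isPositive_of_tendsto_inner (u := v - u) huv fun x y => ?_)
  simpa [inner_sub_left] using (hB x y).sub (hA x y)

end WeakLimits

theorem isArchimedeanOrderUnit_one {A : Type*} [CStarAlgebra A] [PartialOrder A]
    [StarOrderedRing A] : IsArchimedeanOrderUnit (1 : A) where
  nonneg := zero_le_one
  exists_le_nsmul x hx := by
    obtain ⟨c, hc⟩ := exists_nat_ge ‖x‖
    refine ⟨c, (IsSelfAdjoint.of_nonneg hx).le_algebraMap_norm_self.trans ?_⟩
    simpa using algebraMap_mono A hc
  nonpos_of_forall_nsmul_le x c h := by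
    have hlim : Tendsto (fun n : ℕ => (n : ℝ)⁻¹ • c • (1 : A)) atTop (𝓝 0) := by
      simpa using (tendsto_inv_atTop_nhds_zero_nat (𝕜 := ℝ)).smul_const (c • (1 : A))
    refine ge_of_tendsto hlim ?_
    filter_upwards [eventually_ne_atTop 0] with n hn
    have hscaled := smul_le_smul_of_nonneg_left (h n) (inv_nonneg.2 (n.cast_nonneg (α := ℝ)))
    rwa [← Nat.cast_smul_eq_nsmul ℝ n x, inv_smul_smul₀ (Nat.cast_ne_zero.2 hn)] at hscaled

section StrongLimits

variable {H : Type*} [NormedAddCommGroup H] [InnerProductSpace ℂ H] [CompleteSpace H]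

theorem sq_norm_apply_le_re_inner {A : H →L[ℂ] H} (h0 : 0 ≤ A) (h1 : A ≤ 1) (x : H) :
    ‖A x‖ ^ 2 ≤ (⟪A x, x⟫_ℂ).re := by
  have hsq : A ^ 2 ≤ A := by simpa using CStarAlgebra.pow_antitone h0 h1 one_le_two
  have hinner : ⟪(A ^ 2) x, x⟫_ℂ = ⟪A x, A x⟫_ℂ :=
    ((ContinuousLinearMap.nonneg_iff_isPositive A).1 h0).inner_left_eq_inner_right (A x) x
  have hre := ((ContinuousLinearMap.le_def _ _).1 hsq).re_inner_nonneg_left x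
  rw [sub_apply, inner_sub_left, hinner, map_sub, inner_self_eq_norm_sq] at hre
  exact sub_nonneg.1 hre

theorem tendsto_apply_zero_of_le {ι : Type*} {l : Filter ι} {A B : ι → H →L[ℂ] H}
    (h0 : ∀ i, 0 ≤ A i) (h1 : ∀ i, A i ≤ 1) (hAB : ∀ i, A i ≤ B i) {x : H}
    (hB : Tendsto (fun i => B i x) l (𝓝 0)) : Tendsto (fun i => A i x) l (𝓝 0) := by
  have hbound : ∀ i, ‖A i x‖ ^ 2 ≤ ‖B i x‖ * ‖x‖ := fun i => by
    have hre := ((ContinuousLinearMap.le_def _ _).1 (hAB i)).re_inner_nonneg_left x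
    rw [sub_apply, inner_sub_left, map_sub] at hre
    calc ‖A i x‖ ^ 2 ≤ (⟪A i x, x⟫_ℂ).re := sq_norm_apply_le_re_inner (h0 i) (h1 i) x
      _ ≤ (⟪B i x, x⟫_ℂ).re := sub_nonneg.1 hre
      _ ≤ ‖B i x‖ * ‖x‖ := re_inner_le_norm (𝕜 := ℂ) _ _
  have hsq : Tendsto (fun i => ‖A i x‖ ^ 2) l (𝓝 0) :=
    squeeze_zero (fun i => sq_nonneg _) hbound (by simpa using hB.norm.mul_const ‖x‖)
  exact tendsto_zero_iff_norm_tendsto_zero.2 (by simpa using hsq.sqrt)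

variable {R ι : Type*} [CommRing R] [Module R (H →L[ℂ] H)] [Fintype ι] {φ : ι → R}

theorem tendsto_pow_smul_one_zero_of_tendsto_prod (hφ : ∀ i, Monotone fun Y : H →L[ℂ] H => φ i • Y)
    (h : ∀ (q : ι → ℕ) (s : Finset ι), 0 ≤ (∏ i ∈ s, (1 - φ i ^ q i)) • (1 : H →L[ℂ] H)) {x : H}
    (hprod : Tendsto (fun q : ι → ℕ => ((∏ i, (1 - φ i ^ q i)) • (1 : H →L[ℂ] H)) x) atTop (𝓝 x))
    (j : ι) : Tendsto (fun p : ℕ => (φ j ^ p • (1 : H →L[ℂ] H)) x) atTop (𝓝 0) := by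
  have hle : ∀ p : ℕ, φ j ^ p • (1 : H →L[ℂ] H) ≤ 1 - (∏ i, (1 - φ i ^ p)) • 1 := fun p =>
    pow_smul_le_sub_prod_smul hφ (h fun _ => p) (Finset.mem_univ j)
  have hdiag : Tendsto (fun (p : ℕ) (_ : ι) => p) atTop atTop :=
    tendsto_atTop_atTop_of_monotone (fun _ _ hpq _ => hpq) fun q =>
      ⟨Finset.univ.sup q, fun i => Finset.le_sup (Finset.mem_univ i)⟩
  refine tendsto_apply_zero_of_le
    (fun p => smul_nonneg_of_monotone (monotone_pow_smul (hφ j) p) zero_le_one)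
    (fun p => (hle p).trans (sub_le_self _ (h _ _))) hle ?_
  simpa using (hprod.comp hdiag).const_sub x

theorem tendsto_prod_smul_one_of_tendsto_pow (hφ : ∀ i, Monotone fun Y : H →L[ℂ] H => φ i • Y)
    (h : ∀ (q : ι → ℕ) (s : Finset ι), 0 ≤ (∏ i ∈ s, (1 - φ i ^ q i)) • (1 : H →L[ℂ] H)) {x : H}
    (hpow : ∀ i, Tendsto (fun p : ℕ => (φ i ^ p • (1 : H →L[ℂ] H)) x) atTop (𝓝 0)) :
    Tendsto (fun q : ι → ℕ => ((∏ i, (1 - φ i ^ q i)) • (1 : H →L[ℂ] H)) x) atTop (𝓝 x) := by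
  have heval : ∀ i, Tendsto (fun q : ι → ℕ => q i) atTop atTop := fun i =>
    tendsto_atTop_atTop_of_monotone (fun _ _ hqr => hqr i) fun b => ⟨fun _ => b, le_rfl⟩
  have hsum : Tendsto (fun q : ι → ℕ => (∑ i, φ i ^ q i • (1 : H →L[ℂ] H)) x) atTop (𝓝 0) := by
    simpa [sum_apply] using
      tendsto_finsetSum Finset.univ fun i _ => (hpow i).comp (heval i)
  have hdefect := tendsto_apply_zero_of_le
    (fun q => sub_nonneg.2 (prod_one_sub_pow_smul_le hφ (h q) Finset.univ))
    (fun q => sub_le_self _ (h q _))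
    (fun q => sub_prod_smul_le_sum_pow_smul hφ (h q) Finset.univ) hsum
  simpa using hdefect.const_sub x

end StrongLimits

section PhiMap

variable {H : Type*} [NormedAddCommGroup H] [InnerProductSpace ℂ H] {d : ℕ}
  {X : Fin d → H →L[ℂ] H} {S Y : H →L[ℂ] H}

theorem commute_listProd_right (hS : ∀ j, Commute S (X j)) (w : List (Fin d)) :
    Commute S (listProd X w) := by
  refine Commute.list_prod_right _ _ fun Z hZ => ?_
  obtain ⟨j, -, rfl⟩ := List.mem_map.1 hZ
  exact hS j

theorem conj_conj_of_commute {A : Type*} [Semigroup A] [StarMul A] {s t : A} (h : Commute s t)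
    (y : A) : t * (s * y * star s) * star t = s * (t * y * star t) * star s :=
  calc t * (s * y * star s) * star t = t * s * y * star (t * s) := by
        simp only [star_mul, mul_assoc]
    _ = s * t * y * star (s * t) := by rw [h.eq]
    _ = s * (t * y * star t) * star s := by simp only [star_mul, mul_assoc]

variable [CompleteSpace H] {c : List (Fin d) → ℝ}

theorem phiPartial_conj (hS : ∀ j, Commute S (X j)) (N : ℕ) :
    phiPartial c X (S * Y * star S) N = S * phiPartial c X Y N * star S := by
  simp only [phiPartial, ← ContinuousLinearMap.star_eq_adjoint, Finset.mul_sum, Finset.sum_mul,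
    mul_smul_comm, smul_mul_assoc, conj_conj_of_commute (commute_listProd_right hS _)]

theorem monotone_phiPartial (hc : ∀ w, 0 ≤ c w) (hY : 0 ≤ Y) : Monotone (phiPartial c X Y) := by
  intro N M hNM
  refine Finset.sum_le_sum_of_subset_of_nonneg (Finset.Icc_subset_Icc_right hNM) fun l _ _ =>
    Finset.sum_nonneg fun w _ => ?_
  rw [Complex.coe_smul, ← ContinuousLinearMap.star_eq_adjoint]
  exact smul_nonneg (hc _) (star_right_conjugate_nonneg hY _)

namespace IsPhiMap

variable {Φ : Module.End ℂ (H →L[ℂ] H)}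

theorem phiPartial_le (h : IsPhiMap c X Φ) (hc : ∀ w, 0 ≤ c w) (hY : 0 ≤ Y) (N : ℕ) :
    phiPartial c X Y N ≤ Φ Y :=
  le_of_tendsto_inner ((eventually_ge_atTop N).mono fun _ hM => monotone_phiPartial hc hY hM)
    (fun _ _ => tendsto_const_nhds) (h Y)

theorem monotone (h : IsPhiMap c X Φ) (hc : ∀ w, 0 ≤ c w) : Monotone Φ :=
  (monotone_iff_map_nonneg Φ).2 fun Y hY => by simpa [phiPartial] using h.phiPartial_le hc hY 0

theorem map_conj (h : IsPhiMap c X Φ) (hS : ∀ j, Commute S (X j)) (Y : H →L[ℂ] H) :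
    Φ (S * Y * star S) = S * Φ Y * star S := by
  refine ContinuousLinearMap.ext fun x => ext_inner_right ℂ fun y =>
    tendsto_nhds_unique (h _ x y) ?_
  simp_rw [phiPartial_conj hS]
  simpa [ContinuousLinearMap.star_eq_adjoint, ← ContinuousLinearMap.adjoint_inner_right] using
    h Y (star S x) (star S y)

variable {d' : ℕ} {c' : List (Fin d') → ℝ} {X' : Fin d' → H →L[ℂ] H}
  {Φ' : Module.End ℂ (H →L[ℂ] H)}

theorem map_phiPartial (h : IsPhiMap c X Φ) (hX : ∀ p q, Commute (X p) (X' q))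
    (Y : H →L[ℂ] H) (N : ℕ) : Φ (phiPartial c' X' Y N) = phiPartial c' X' (Φ Y) N := by
  have hconj : ∀ w, Φ (listProd X' w * Y * star (listProd X' w)) =
      listProd X' w * Φ Y * star (listProd X' w) := fun w =>
    h.map_conj (fun p => (commute_listProd_right (hX p) w).symm) Y
  simp only [phiPartial, ← ContinuousLinearMap.star_eq_adjoint, map_sum, map_smul, hconj]

-- `Φ` need not be weakly continuous, so only an inequality survives a weak limit inside it;
-- exchanging the two maps gives equality.
theorem map_map_le (h : IsPhiMap c X Φ) (h' : IsPhiMap c' X' Φ') (hc : ∀ w, 0 ≤ c w)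
    (hc' : ∀ w, 0 ≤ c' w) (hX : ∀ p q, Commute (X p) (X' q)) (hY : 0 ≤ Y) :
    Φ' (Φ Y) ≤ Φ (Φ' Y) := by
  refine le_of_tendsto_inner (.of_forall fun N => ?_) (h' (Φ Y)) fun _ _ => tendsto_const_nhds
  rw [← h.map_phiPartial hX]
  exact h.monotone hc (h'.phiPartial_le hc' hY N)

theorem commute (h : IsPhiMap c X Φ) (h' : IsPhiMap c' X' Φ') (hc : ∀ w, 0 ≤ c w)
    (hc' : ∀ w, 0 ≤ c' w) (hX : ∀ p q, Commute (X p) (X' q)) : Commute Φ Φ' :=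
  LinearMap.ext_on CStarAlgebra.span_nonneg fun _ hY => le_antisymm
    (h'.map_map_le h hc' hc (fun q p => (hX p q).symm) hY) (h.map_map_le h' hc hc' hX hY)

end IsPhiMap

end PhiMap

section CommutingEndomorphisms

variable {H : Type*} [NormedAddCommGroup H] [InnerProductSpace ℂ H] {k : ℕ}

theorem map_prod_eq_prod_ofFn {F R A : Type*} [CommMonoid R] [Monoid A] [FunLike F R A]
    [MonoidHomClass F R A] (ρ : F) (f : Fin k → R) :
    ρ (∏ i, f i) = (List.ofFn fun i => ρ (f i)).prod := by
  rw [← List.prod_ofFn, map_list_prod, List.map_ofFn, Function.comp_def]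

variable {R : Type*} [CommRing R] (ρ : R →+* Module.End ℂ (H →L[ℂ] H)) (φ : Fin k → R)

theorem Delta_map (p : Fin k → ℕ) :
    Delta (fun i => ρ (φ i)) p = ρ (∏ i, (1 - φ i) ^ p i) := by
  simpa [Delta] using (map_prod_eq_prod_ofFn ρ fun i => (1 - φ i) ^ p i).symm

theorem DeltaPow_map (q : Fin k → ℕ) :
    DeltaPow (fun i => ρ (φ i)) q = ρ (∏ i, (1 - φ i ^ q i)) := by
  simpa [DeltaPow] using (map_prod_eq_prod_ofFn ρ fun i => 1 - φ i ^ q i).symm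

theorem isPure_map_iff [CompleteSpace H] (hmono : ∀ i, Monotone (ρ (φ i)))
    (hone : ∀ i, ρ (φ i) 1 ≤ 1) {m : Fin k → ℕ} (hm : ∀ i, 1 ≤ m i)
    (hmem : ∀ t : Finset (Fin k), 0 ≤ ρ (∏ i ∈ t, (1 - φ i) ^ m i) 1) :
    IsPure (fun i => ρ (φ i)) ↔
      ∀ i (x : H), Tendsto (fun p : ℕ => ((ρ (φ i) ^ p) (1 : H →L[ℂ] H)) x) atTop (𝓝 0) := by
  let _ : Module R (H →L[ℂ] H) := Module.compHom _ ρ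
  have hnonneg :=
    isArchimedeanOrderUnit_one.prod_one_sub_pow_smul_nonneg (φ := φ) hmono hone hm hmem
  simp only [IsPure, DeltaPow_map, ← map_pow]
  exact ⟨fun h i x => tendsto_pow_smul_one_zero_of_tendsto_prod hmono hnonneg (h x) i,
    fun h x => tendsto_prod_smul_one_of_tendsto_pow hmono hnonneg fun i => h i x⟩

end CommutingEndomorphisms

open scoped IsMulCommutative in
theorem stmt_4_general {H : Type*} [NormedAddCommGroup H] [InnerProductSpace ℂ H]
    [CompleteSpace H] {k : ℕ} {m : Fin k → ℕ} (hm : ∀ i, 1 ≤ m i)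
    (Φ : Fin k → Module.End ℂ (H →L[ℂ] H)) (hmono : ∀ i, Monotone (Φ i))
    (hcomm : Pairwise fun i j => Commute (Φ i) (Φ j))
    (hcontr : ∀ i, ((1 : H →L[ℂ] H) - Φ i 1).IsPositive)
    (hmem : ∀ ε : Fin k → Bool, ((Delta Φ fun i => if ε i then m i else 0) 1).IsPositive) :
    IsPure Φ ↔
      ∀ i (x : H), Tendsto (fun p : ℕ => (((Φ i) ^ p) (1 : H →L[ℂ] H)) x) atTop (𝓝 0) := by
  have hmul : IsMulCommutative (Subring.closure (Set.range Φ)) :=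
    Subring.isMulCommutative_closure <| by
      rintro _ ⟨i, rfl⟩ _ ⟨j, rfl⟩
      obtain rfl | hij := eq_or_ne i j
      exacts [rfl, hcomm hij]
  let ρ := (Subring.closure (Set.range Φ)).subtype
  let φ : Fin k → Subring.closure (Set.range Φ) := fun i => ⟨Φ i, Subring.subset_closure ⟨i, rfl⟩⟩
  refine isPure_map_iff ρ φ hmono hcontr hm fun t => ?_
  have ht := (ContinuousLinearMap.nonneg_iff_isPositive _).2 (hmem fun i => decide (i ∈ t))
  change 0 ≤ Delta (fun i => ρ (φ i)) _ 1 at ht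
  simpa [Delta_map, pow_ite, Finset.prod_ite_mem] using ht

/-- **Proposition 1.6 (Popescu).**  A `k`-tuple `T = (T_1, …, T_k) ∈ D_f^m(H)` is pure
(i.e. `(id−Φ_{f_k,T_k}^{q_k}) ⋯ (id−Φ_{f_1,T_1}^{q_1})(I) → I`) if and only if, for each
`i ∈ {1, …, k}`, `Φ_{f_i,T_i}^p(I) → 0` strongly as `p → ∞`. -/
theorem stmt_4 {H : Type*} [NormedAddCommGroup H] [InnerProductSpace ℂ H] [CompleteSpace H]
    {k : ℕ} {n : Fin k → ℕ} (hn : ∀ i, 1 ≤ n i) {m : Fin k → ℕ} (hm : ∀ i, 1 ≤ m i)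
    (a : ∀ i, List (Fin (n i)) → ℝ) (ha : ∀ i, PosRegCoeffs (a i))
    (T : ∀ i, Fin (n i) → (H →L[ℂ] H)) (hT : CommutingTuples T)
    (Φ : Fin k → Module.End ℂ (H →L[ℂ] H))
    (hΦ : ∀ i, IsPhiMap (a i) (T i) (Φ i))
    (hcontr : ∀ i, ((1 : H →L[ℂ] H) - Φ i 1).IsPositive)
    (hmem : ∀ ε : Fin k → Bool, ((Delta Φ fun i => if ε i then m i else 0) 1).IsPositive) :
    IsPure Φ ↔
      ∀ i (x : H), Tendsto (fun p : ℕ => (((Φ i) ^ p) (1 : H →L[ℂ] H)) x) atTop (𝓝 0) :=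
  stmt_4_general hm Φ (fun i => (hΦ i).monotone (ha i).1)
    (fun i j hij => (hΦ i).commute (hΦ j) (ha i).1 (ha j).1 (hT i j hij)) hcontr hmem

end NC
end
end

section
/- Let T = (T_1,…,T_k) ∈ B(H)^{n_1} ×_c ⋯ ×_c B(H)^{n_k} be such that Φ_{f_i,T_i}(I) ≤ I for every i, and let m = (m_1,…,m_k) ∈ ℕ^k. If m_1 Φ_{f_1,T_1}(I) + ⋯ + m_k Φ_{f_k,T_k}(I) ≤ I, then T ∈ D_f^m(H). -/
open Filter Topology
open scoped InnerProductSpace Topology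

noncomputable section

namespace NC

/-!
By the Weierstrass inequality `(1 - φ₁) ⋯ (1 - φᵣ) e ≥ e - ∑ φⱼ e`, valid for monotone additive
maps `φⱼ` and `e ≥ 0` with `∑ φⱼ e ≤ e`, it suffices that each `Φ_{f,X}` preserve positivity, which
it does as a WOT limit of nonnegative combinations of conjugations. The lower bound alone does not
survive composition with a further factor: `A - φ A` is bounded below through an upper bound on
`A`, so `e - s ≤ A` and `A ≤ e` are carried along together.
-/

section OneSub

variable {R E ι : Type*} [Semiring R] [AddCommGroup E] [PartialOrder E] [IsOrderedAddMonoid E]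
  [Module R E] {e s A : E}

theorem one_sub_apply_mem_Icc {φ : Module.End R E} (hφ : Monotone φ) (he : 0 ≤ e)
    (hs : s + φ e ≤ e) (hA : A ∈ Set.Icc (e - s) e) :
    (1 - φ) A ∈ Set.Icc (e - (s + φ e)) e := by
  have map_nonneg : ∀ {y}, 0 ≤ y → 0 ≤ φ y := (monotone_iff_map_nonneg φ).1 hφ _
  have hA₀ : 0 ≤ A :=
    calc 0 ≤ φ e := map_nonneg he
      _ ≤ e - s := le_sub_iff_add_le'.2 hs
      _ ≤ A := hA.1
  refine ⟨?_, (sub_le_self A (map_nonneg hA₀)).trans hA.2⟩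
  calc e - (s + φ e) = e - s - φ e := (sub_sub e s (φ e)).symm
    _ ≤ A - φ A := sub_le_sub hA.1 (hφ hA.2)

theorem one_sub_pow_apply_mem_Icc {φ : Module.End R E} (hφ : Monotone φ) (he : 0 ≤ e) {n : ℕ}
    (hs : s + n • φ e ≤ e) (hA : A ∈ Set.Icc (e - s) e) :
    ((1 - φ) ^ n) A ∈ Set.Icc (e - (s + n • φ e)) e := by
  induction n with
  | zero => simpa using hA
  | succ n ih =>
    rw [succ_nsmul, ← add_assoc] at hs ⊢
    rw [pow_succ']
    have hφe : 0 ≤ φ e := (monotone_iff_map_nonneg φ).1 hφ e he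
    exact one_sub_apply_mem_Icc hφ he hs (ih ((le_add_of_nonneg_right hφe).trans hs))

theorem prod_one_sub_pow_apply_mem_Icc {φ : ι → Module.End R E} (hφ : ∀ i, Monotone (φ i))
    (he : 0 ≤ e) (p : ι → ℕ) (l : List ι) (hl : (l.map fun i => p i • φ i e).sum ≤ e) :
    (l.map fun i => (1 - φ i) ^ p i).prod e ∈
      Set.Icc (e - (l.map fun i => p i • φ i e).sum) e := by
  induction l with
  | nil => simp
  | cons i l ih =>
    simp only [List.map_cons, List.sum_cons, List.prod_cons, Module.End.mul_apply] at hl ⊢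
    rw [add_comm] at hl ⊢
    have hφe : 0 ≤ p i • φ i e :=
      nsmul_nonneg ((monotone_iff_map_nonneg (φ i)).1 (hφ i) e he) (p i)
    exact one_sub_pow_apply_mem_Icc (hφ i) he hl (ih ((le_add_of_nonneg_right hφe).trans hl))

end OneSub

section HilbertSpace

variable {H : Type*} [NormedAddCommGroup H] [InnerProductSpace ℂ H]

open scoped ComplexOrder in
theorem nonneg_of_tendsto_inner {ι : Type*} {l : Filter ι} [l.NeBot] {A : ι → H →L[ℂ] H}
    {B : H →L[ℂ] H} (hA : ∀ i, 0 ≤ A i)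
    (hAB : ∀ x, Tendsto (fun i => ⟪A i x, x⟫_ℂ) l (𝓝 ⟪B x, x⟫_ℂ)) : 0 ≤ B := by
  have inner_nonneg (x : H) : 0 ≤ ⟪B x, x⟫_ℂ :=
    ge_of_tendsto' (hAB x) fun i =>
      ((ContinuousLinearMap.nonneg_iff_isPositive (A i)).1 (hA i)).inner_nonneg_left x
  rw [ContinuousLinearMap.nonneg_iff_isPositive, ContinuousLinearMap.isPositive_iff_complex]
  exact fun x => ⟨(Complex.eq_re_of_ofReal_le (inner_nonneg x)).symm,
    (Complex.nonneg_iff.1 (inner_nonneg x)).1⟩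

variable [CompleteSpace H]

open scoped ComplexOrder in
theorem phiPartial_nonneg {d : ℕ} {c : List (Fin d) → ℝ} (hc : ∀ w, 0 ≤ c w)
    (X : Fin d → (H →L[ℂ] H)) {Y : H →L[ℂ] H} (hY : 0 ≤ Y) (N : ℕ) :
    0 ≤ phiPartial c X Y N :=
  Finset.sum_nonneg fun _ _ => Finset.sum_nonneg fun w _ =>
    smul_nonneg (Complex.zero_le_real.2 (hc (List.ofFn w))) (star_right_conjugate_nonneg hY _)

theorem IsPhiMap.monotone_s5 {d : ℕ} {c : List (Fin d) → ℝ} (hc : ∀ w, 0 ≤ c w)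
    {X : Fin d → (H →L[ℂ] H)} {Φ : Module.End ℂ (H →L[ℂ] H)} (hΦ : IsPhiMap c X Φ) :
    Monotone Φ :=
  (monotone_iff_map_nonneg Φ).2 fun Y hY =>
    nonneg_of_tendsto_inner (phiPartial_nonneg hc X hY) fun x => hΦ Y x x

theorem delta_apply_mem_Icc {k : ℕ} {Φ : Fin k → Module.End ℂ (H →L[ℂ] H)}
    (hΦ : ∀ i, Monotone (Φ i)) {p : Fin k → ℕ} {Y : H →L[ℂ] H} (hY : 0 ≤ Y)
    (hp : ∑ i, p i • Φ i Y ≤ Y) :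
    Delta Φ p Y ∈ Set.Icc (Y - ∑ i, p i • Φ i Y) Y := by
  rw [← List.sum_ofFn, List.ofFn_eq_map] at hp ⊢
  rw [Delta, List.ofFn_eq_map]
  exact prod_one_sub_pow_apply_mem_Icc hΦ hY p (List.finRange k) hp

theorem delta_apply_nonneg_of_le {k : ℕ} {Φ : Fin k → Module.End ℂ (H →L[ℂ] H)}
    (hΦ : ∀ i, Monotone (Φ i)) {p m : Fin k → ℕ} (hpm : p ≤ m) {Y : H →L[ℂ] H} (hY : 0 ≤ Y)
    (hm : ∑ i, m i • Φ i Y ≤ Y) : 0 ≤ Delta Φ p Y := by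
  have hp : ∑ i, p i • Φ i Y ≤ Y :=
    (Finset.sum_le_sum fun i _ =>
      nsmul_le_nsmul_left ((monotone_iff_map_nonneg (Φ i)).1 (hΦ i) Y hY) (hpm i)).trans hm
  exact (sub_nonneg.2 hp).trans (delta_apply_mem_Icc hΦ hY hp).1

theorem stmt_5_general {k : ℕ} {n : Fin k → ℕ} {m : Fin k → ℕ}
    {a : ∀ i, List (Fin (n i)) → ℝ} (ha : ∀ i w, 0 ≤ a i w)
    {T : ∀ i, Fin (n i) → (H →L[ℂ] H)} (hT : CommutingTuples T)
    {Φ : Fin k → Module.End ℂ (H →L[ℂ] H)} (hΦ : ∀ i, IsPhiMap (a i) (T i) (Φ i))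
    (hcontr : ∀ i, ((1 : H →L[ℂ] H) - Φ i 1).IsPositive)
    (hsum : ((1 : H →L[ℂ] H) - ∑ i, (m i : ℂ) • (Φ i 1)).IsPositive) :
    MemPolydomain a m T := by
  refine ⟨hT, Φ, hΦ, hcontr, fun ε => ?_⟩
  rw [← ContinuousLinearMap.nonneg_iff_isPositive]
  have hpm : (fun i => if ε i then m i else 0) ≤ m := fun i => by dsimp only; split_ifs <;> simp
  have hm : ∑ i, m i • Φ i 1 ≤ (1 : H →L[ℂ] H) := by
    simpa only [ContinuousLinearMap.le_def, Nat.cast_smul_eq_nsmul] using hsum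
  exact delta_apply_nonneg_of_le (fun i => (hΦ i).monotone_s5 (ha i)) hpm zero_le_one hm

end HilbertSpace

/-- **Proposition 1.7(iii) (Popescu).**  Let `T = (T_1, …, T_k)` be a tuple with mutually
commuting coordinate tuples such that each `Φ_{f_i,T_i}` is defined and
`Φ_{f_i,T_i}(I) ≤ I`, and let `m = (m_1, …, m_k) ∈ ℕ^k`.  If
`m_1 Φ_{f_1,T_1}(I) + ⋯ + m_k Φ_{f_k,T_k}(I) ≤ I`, then `T ∈ D_f^m(H)`. -/
theorem stmt_5 {H : Type*} [NormedAddCommGroup H] [InnerProductSpace ℂ H] [CompleteSpace H]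
    {k : ℕ} {n : Fin k → ℕ} (hn : ∀ i, 1 ≤ n i) {m : Fin k → ℕ} (hm : ∀ i, 1 ≤ m i)
    (a : ∀ i, List (Fin (n i)) → ℝ) (ha : ∀ i, PosRegCoeffs (a i))
    (T : ∀ i, Fin (n i) → (H →L[ℂ] H)) (hT : CommutingTuples T)
    (Φ : Fin k → Module.End ℂ (H →L[ℂ] H))
    (hΦ : ∀ i, IsPhiMap (a i) (T i) (Φ i))
    (hcontr : ∀ i, ((1 : H →L[ℂ] H) - Φ i 1).IsPositive)
    (hsum : ((1 : H →L[ℂ] H) - ∑ i, (m i : ℂ) • (Φ i 1)).IsPositive) :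
    MemPolydomain a m T :=
  stmt_5_general (fun i => (ha i).1) hT hΦ hcontr hsum

end NC
end
end
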